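/- Success at k = 1: Let σ be a finite relational signature. For all r, q ∈ ℕ ∪ {∞}, every first-order sentence φ over σ that is preserved under ≼_{r,q,1} over the class of all finite σ-structures is equivalent over the class of all finite σ-structures to an existential local sentence. -/

import Mathlib

open FirstOrder FirstOrder.Language

universe u v w

namespace Gaifman

/-- Two elements are adjacent in the Gaifman graph of a structure: they are distinct and
occur together in some tuple belonging to some relation. -/
def Adj (L : FirstOrder.Language.{u, u}) (M : Type u) [L.Structure M] (a b : M) : Prop :=
  a ≠ b ∧ ∃ (n : ℕ) (R : L.Relations n) (t : Fin n → M),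
    Structure.RelMap R t ∧ a ∈ Set.range t ∧ b ∈ Set.range t

/-- `CloseLE L M r a b` holds iff the Gaifman distance from `a` to `b` is at most `r`. -/
def CloseLE (L : FirstOrder.Language.{u, u}) (M : Type u) [L.Structure M] :
    ℕ → M → M → Prop
  | 0, a, b => a = b
  | r + 1, a, b => CloseLE L M r a b ∨ ∃ c, CloseLE L M r a c ∧ Adj L M c b

lemma closeLE_self (L : FirstOrder.Language.{u, u}) (M : Type u) [L.Structure M] :
    ∀ (r : ℕ) (a : M), CloseLE L M r a a
  | 0, _ => rfl
  | r + 1, a => Or.inl (closeLE_self L M r a)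

/-- The `r`-neighborhood of a tuple: all elements at Gaifman distance at most `r`
from some component of the tuple. -/
def Ball (L : FirstOrder.Language.{u, u}) {M : Type u} [L.Structure M] {m : ℕ}
    (a : Fin m → M) (r : ℕ) : Set M :=
  {x | ∃ i, CloseLE L M r (a i) x}

lemma self_mem_ball (L : FirstOrder.Language.{u, u}) {M : Type u} [L.Structure M] {m : ℕ}
    (a : Fin m → M) (r : ℕ) (i : Fin m) :
    a i ∈ Ball L a r := ⟨i, closeLE_self L M r (a i)⟩

/-- The substructure induced on a subset of a structure over a relational language. -/
def inducedStructure (L : FirstOrder.Language.{u, u}) [L.IsRelational] {M : Type u}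
    [L.Structure M] (s : Set M) : L.Structure s where
  funMap {n} f _ := isEmptyElim f
  RelMap {n} R t := Structure.RelMap R fun i => (t i : M)

/-- A formula is `r`-local if its truth at a tuple only depends on the induced substructure on
the `r`-neighborhood of the tuple. -/
def IsLocal {L : FirstOrder.Language.{u, u}} [L.IsRelational] (r : ℕ) {m : ℕ}
    (φ : L.Formula (Fin m)) : Prop :=
  ∀ (M : Type u) [L.Structure M] (a : Fin m → M),
    φ.Realize a ↔
      (letI := inducedStructure L (Ball L a r)
       φ.Realize fun i => (⟨a i, self_mem_ball L a r i⟩ : Ball L a r))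

/-- Quantifier rank of a (bounded) formula. -/
def qr {L : FirstOrder.Language.{u, u}} {α : Type v} : ∀ {n : ℕ}, L.BoundedFormula α n → ℕ
  | _, .falsum => 0
  | _, .equal _ _ => 0
  | _, .rel _ _ => 0
  | _, .imp f g => max (qr f) (qr g)
  | _, .all f => qr f + 1

/-- The components of a tuple are at pairwise Gaifman distance greater than `s`. -/
def Far (L : FirstOrder.Language.{u, u}) (M : Type u) [L.Structure M] (s : ℕ) {m : ℕ}
    (a : Fin m → M) : Prop :=
  ∀ i j : Fin m, i ≠ j → ¬ CloseLE L M s (a i) (a j)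

/-- `A ≼_{r,q,k} B` : every sentence `∃ x₁ … x_k, τ` with `τ` an `r`-local formula of
quantifier rank at most `q` that holds in `A` also holds in `B`. -/
def LocLE (L : FirstOrder.Language.{u, u}) [L.IsRelational] (r q k : ℕ) (M N : Type u)
    [L.Structure M] [L.Structure N] : Prop :=
  ∀ τ : L.Formula (Fin k), IsLocal r τ → qr τ ≤ q →
    (∃ a : Fin k → M, τ.Realize a) → ∃ b : Fin k → N, τ.Realize b

/-- The preorder `≼_{r,q,k}` with radius and rank parameters in `ℕ ∪ {∞}`: the intersection
over all finite parameters below the given ones. -/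
def LocLEE (L : FirstOrder.Language.{u, u}) [L.IsRelational] (r q : ℕ∞) (k : ℕ)
    (M N : Type u) [L.Structure M] [L.Structure N] : Prop :=
  ∀ r' q' : ℕ, (r' : ℕ∞) ≤ r → (q' : ℕ∞) ≤ q → LocLE L r' q' k M N

/-- Local elementary embedding. -/
def IsLocalElemEmb (L : FirstOrder.Language.{u, u}) [L.IsRelational] {M N : Type u}
    [L.Structure M] [L.Structure N] (h : M → N) : Prop :=
  ∀ (k r : ℕ) (a : Fin k → M) (φ : L.Formula (Fin k)), IsLocal r φ →
    (φ.Realize a ↔ φ.Realize (h ∘ a))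

/-- Disjoint union of two structures over a relational language. -/
def sumStructure (L : FirstOrder.Language.{u, u}) [L.IsRelational] (M N : Type u)
    [L.Structure M] [L.Structure N] : L.Structure (M ⊕ N) where
  funMap {n} f _ := isEmptyElim f
  RelMap {n} R t :=
    (∃ tm : Fin n → M, t = Sum.inl ∘ tm ∧ Structure.RelMap R tm) ∨
    (∃ tn : Fin n → N, t = Sum.inr ∘ tn ∧ Structure.RelMap R tn)

/-- A bundled `L`-structure. -/
structure Struc (L : FirstOrder.Language.{u, u}) : Type (u + 1) where
  carrier : Type u
  str : L.Structure carrier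

attribute [instance] Struc.str

/-- The `(q,r)`-local type of a tuple. -/
def localType (L : FirstOrder.Language.{u, u}) [L.IsRelational] (r q : ℕ) {M : Type u}
    [L.Structure M] {m : ℕ} (a : Fin m → M) : Set (L.Formula (Fin m)) :=
  {τ | IsLocal r τ ∧ qr τ ≤ q ∧ τ.Realize a}

/-- The collection of `(q,r)`-local types of tuples of at most `k` elements. -/
def Specter (L : FirstOrder.Language.{u, u}) [L.IsRelational] (r q k : ℕ) (M : Type u)
    [L.Structure M] : Set (Σ m : ℕ, Set (L.Formula (Fin m))) :=
  {p | ∃ m, m ≤ k ∧ ∃ a : Fin m → M, p = ⟨m, localType L r q a⟩}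

/-- The data of a basic local sentence
`∃ x₁ … x_k, (⋀_{i ≠ j} d(xᵢ,xⱼ) > 2r ∧ ⋀ᵢ ψ(xᵢ))`. -/
structure BasicLocal (L : FirstOrder.Language.{u, u}) [L.IsRelational] where
  k : ℕ
  r : ℕ
  ψ : L.Formula (Fin 1)
  isLocal : IsLocal r ψ

/-- Truth of a basic local sentence in a structure. -/
def BasicLocal.Holds {L : FirstOrder.Language.{u, u}} [L.IsRelational] (b : BasicLocal L)
    (M : Type u) [L.Structure M] : Prop :=
  ∃ a : Fin b.k → M, Far L M (2 * b.r) a ∧ ∀ i, b.ψ.Realize fun _ => a i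

/-- The data of an asymmetric basic local sentence
`∃ x₁ … x_k, (⋀_{i ≠ j} d(xᵢ,xⱼ) > 2r ∧ ⋀ᵢ ψᵢ(xᵢ))`. -/
structure AsymBasicLocal (L : FirstOrder.Language.{u, u}) [L.IsRelational] where
  k : ℕ
  r : ℕ
  ψ : Fin k → L.Formula (Fin 1)
  isLocal : ∀ i, IsLocal r (ψ i)

/-- Truth of an asymmetric basic local sentence in a structure. -/
def AsymBasicLocal.Holds {L : FirstOrder.Language.{u, u}} [L.IsRelational]
    (d : AsymBasicLocal L) (M : Type u) [L.Structure M] : Prop :=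
  ∃ a : Fin d.k → M, Far L M (2 * d.r) a ∧ ∀ i, (d.ψ i).Realize fun _ => a i

/-- Positive Boolean combinations (conjunction and disjunction only). -/
inductive PosBool (α : Type w) : Type w
  | base : α → PosBool α
  | conj : PosBool α → PosBool α → PosBool α
  | disj : PosBool α → PosBool α → PosBool α

/-- Evaluation of a positive Boolean combination against a truth assignment. -/
def PosBool.Eval {α : Type w} (v : α → Prop) : PosBool α → Prop
  | .base a => v a
  | .conj p q => p.Eval v ∧ q.Eval v
  | .disj p q => p.Eval v ∨ q.Eval v

/-- `φ` is equivalent over the class `C` to an existential local sentence `∃ x⃗, τ(x⃗)`. -/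
def EquivToExistLocal {L : FirstOrder.Language.{u, u}} [L.IsRelational]
    (C : Set (Struc L)) (φ : L.Sentence) : Prop :=
  ∃ (k r : ℕ) (τ : L.Formula (Fin k)), IsLocal r τ ∧
    ∀ S ∈ C, (S.carrier ⊨ φ ↔ ∃ a : Fin k → S.carrier, τ.Realize a)

/-- `A ⊆ᵢ B` : `A` is isomorphic to an induced substructure of `B`. -/
def SubInd {L : FirstOrder.Language.{u, u}} (A B : Struc L) : Prop :=
  Nonempty (A.carrier ↪[L] B.carrier)

/-- A hereditary class: closed under induced substructures. -/
def Hereditary {L : FirstOrder.Language.{u, u}} (C : Set (Struc L)) : Prop :=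
  ∀ B ∈ C, ∀ A : Struc L, SubInd A B → A ∈ C

/-- `φ` is preserved under extensions over `C`. -/
def PreservedUnderExt {L : FirstOrder.Language.{u, u}} (C : Set (Struc L))
    (φ : L.Sentence) : Prop :=
  ∀ A ∈ C, ∀ B ∈ C, A.carrier ⊨ φ → SubInd A B → B.carrier ⊨ φ

/-- `C` is closed under disjoint unions with finite structures. -/
def ClosedUnderDisjointUnions {L : FirstOrder.Language.{u, u}} [L.IsRelational]
    (C : Set (Struc L)) : Prop :=
  ∀ A ∈ C, ∀ B : Struc L, Finite B.carrier →
    (⟨A.carrier ⊕ B.carrier, sumStructure L A.carrier B.carrier⟩ : Struc L) ∈ C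

/-- `Balls(C, r, k)` : the structures isomorphic to an `r`-neighborhood of a tuple of at most
`k` elements of a structure of `C`. -/
def BallsClass {L : FirstOrder.Language.{u, u}} [L.IsRelational] (C : Set (Struc L))
    (r k : ℕ) : Set (Struc L) :=
  {T | ∃ A ∈ C, ∃ m, m ≤ k ∧ ∃ a : Fin m → A.carrier,
    letI := inducedStructure L (Ball L a r)
    Nonempty (T.carrier ≃[L] ↥(Ball L a r))}

/-- A `⊆ᵢ`-minimal model of `φ` in `C`: a model in `C` no proper induced substructure of
which satisfies `φ`. -/
def IsMinimalModel {L : FirstOrder.Language.{u, u}} [L.IsRelational] (C : Set (Struc L))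
    (φ : L.Sentence) (A : Struc L) : Prop :=
  A ∈ C ∧ A.carrier ⊨ φ ∧
    ∀ s : Set A.carrier,
      (letI := inducedStructure L s
       (↥s) ⊨ φ) → s = Set.univ

/-- Preservation under extensions holds over the class `D`: every sentence preserved under
extensions over `D` is equivalent over `D` to an existential sentence. -/
def PresExtHolds {L : FirstOrder.Language.{u, u}} [L.IsRelational]
    (D : Set (Struc L)) : Prop :=
  ∀ φ : L.Sentence, PreservedUnderExt D φ →
    ∃ (n : ℕ) (θ : L.Formula (Fin n)), θ.IsQF ∧
      ∀ S ∈ D, (S.carrier ⊨ φ ↔ ∃ a : Fin n → S.carrier, θ.Realize a)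

end Gaifman

open Gaifman

/-!
Two elements are *locally equivalent* if they cannot be told apart in a back-and-forth game whose
moves stay within a radius that is halved from round to round. Over a finite signature this is
decided by finitely many local formulas `θ(x)`, so everything reduces to one claim: if `A ⊨ φ` and
every element of `A` is locally equivalent to an element of `B`, then `B ⊨ φ`. Granted this, `φ`
says that the elements realise all the types realised in one of its models, and there are only
finitely many such sets of types.

For the claim, let `K > qr φ` be the number of rounds. Then
`A ≼ A ⊔ K · B ≡ K · B ≼ B`, where `≼` is `≼_{r,q,1}` and `≡` is agreement on `φ`.
The first step holds because `A` is a union of connected components, and the last because a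
single element sees only one of the copies of `B`. The middle one is an Ehrenfeucht–Fraïssé game:
a move near the elements chosen so far is answered by the local game, and any other move is
answered in a fresh copy of `B`.
-/

namespace Gaifman

/-! ### Gaifman distance and embeddings -/

section Distance

variable {L : FirstOrder.Language.{u, u}} {M N : Type u} [L.Structure M] [L.Structure N]

lemma Adj.symm {a b : M} (h : Adj L M a b) : Adj L M b a :=
  let ⟨hne, n, R, t, hR, ha, hb⟩ := h
  ⟨hne.symm, n, R, t, hR, hb, ha⟩

lemma Adj.map (f : M ↪[L] N) {a b : M} (h : Adj L M a b) : Adj L N (f a) (f b) := by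
  obtain ⟨hne, n, R, t, hR, ⟨i, rfl⟩, ⟨j, rfl⟩⟩ := h
  exact ⟨f.injective.ne hne, n, R, f ∘ t, (f.map_rel R t).2 hR, ⟨i, rfl⟩, ⟨j, rfl⟩⟩

lemma CloseLE.mono {r s : ℕ} (hrs : r ≤ s) {a b : M} (h : CloseLE L M r a b) :
    CloseLE L M s a b := by
  induction hrs with
  | refl => exact h
  | step _ ih => exact Or.inl ih

lemma CloseLE.trans {r s : ℕ} {a b c : M} (hab : CloseLE L M r a b) (hbc : CloseLE L M s b c) :
    CloseLE L M (r + s) a c := by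
  induction s generalizing c with
  | zero => cases hbc; exact hab
  | succ s ih =>
    rcases hbc with hbc | ⟨d, hbd, hdc⟩
    · exact Or.inl (ih hbc)
    · exact Or.inr ⟨d, ih hbd, hdc⟩

lemma CloseLE.symm {r : ℕ} {a b : M} (h : CloseLE L M r a b) : CloseLE L M r b a := by
  induction r generalizing b with
  | zero => cases h; rfl
  | succ r ih =>
    rcases h with h | ⟨d, had, hdb⟩
    · exact Or.inl (ih h)
    · have hbd : CloseLE L M 1 b d := Or.inr ⟨b, rfl, hdb.symm⟩
      exact add_comm r 1 ▸ hbd.trans (ih had)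

lemma CloseLE.map (f : M ↪[L] N) {r : ℕ} {a b : M} (h : CloseLE L M r a b) :
    CloseLE L N r (f a) (f b) := by
  induction r generalizing b with
  | zero => exact congrArg f h
  | succ r ih =>
    rcases h with h | ⟨d, had, hdb⟩
    · exact Or.inl (ih h)
    · exact Or.inr ⟨f d, ih had, hdb.map f⟩

lemma closeLE_one_of_relMap {n : ℕ} {R : L.Relations n} {t : Fin n → M}
    (h : Structure.RelMap R t) (i j : Fin n) : CloseLE L M 1 (t i) (t j) := by
  by_cases e : t i = t j
  · exact Or.inl e
  · exact Or.inr ⟨t i, rfl, e, n, R, t, h, ⟨i, rfl⟩, ⟨j, rfl⟩⟩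

variable (L) in
/-- The `r`-neighborhood of a set: the analogue of `Ball` for sets of elements. -/
def setBall (A : Set M) (r : ℕ) : Set M :=
  {x | ∃ a ∈ A, CloseLE L M r a x}

lemma ball_eq_setBall {m : ℕ} (a : Fin m → M) (r : ℕ) :
    Ball L a r = setBall L (Set.range a) r := by
  ext x
  simp only [Ball, setBall, Set.mem_ofPred_eq, Set.exists_range_iff]

lemma setBall_mono {A B : Set M} (hAB : A ⊆ B) {r s : ℕ} (hrs : r ≤ s) :
    setBall L A r ⊆ setBall L B s :=
  fun _ ⟨a, ha, hx⟩ => ⟨a, hAB ha, hx.mono hrs⟩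

lemma subset_setBall (A : Set M) (r : ℕ) : A ⊆ setBall L A r :=
  fun a ha => ⟨a, ha, closeLE_self L M r a⟩

lemma setBall_setBall_subset (A : Set M) (r s : ℕ) :
    setBall L (setBall L A r) s ⊆ setBall L A (r + s) :=
  fun _ ⟨_, ⟨a, ha, hay⟩, hyx⟩ => ⟨a, ha, hay.trans hyx⟩

lemma setBall_insert_subset {A : Set M} {c : M} {r : ℕ} (hc : c ∈ setBall L A r) (s : ℕ) :
    setBall L (insert c A) s ⊆ setBall L A (r + s) :=
  (setBall_mono (Set.insert_subset hc (subset_setBall A r)) le_rfl).trans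
    (setBall_setBall_subset A r s)

lemma setBall_union (A B : Set M) (r : ℕ) :
    setBall L (A ∪ B) r = setBall L A r ∪ setBall L B r := by
  ext x
  simp only [setBall, Set.mem_union, Set.mem_ofPred_eq, or_and_right, exists_or]

lemma disjoint_setBall_symm {A B : Set M} {r : ℕ} (h : Disjoint (setBall L A r) B) :
    Disjoint (setBall L B r) A := by
  rw [Set.disjoint_left] at h ⊢
  rintro a ⟨b, hb, hba⟩ ha
  exact h ⟨a, ha, hba.symm⟩ hb

lemma Adj.of_map {f : M ↪[L] N} {a b : M} (hf : setBall L {f a} 1 ⊆ Set.range f)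
    (h : Adj L N (f a) (f b)) : Adj L M a b := by
  obtain ⟨hne, n, R, t, hR, ⟨i, hi⟩, ⟨j, hj⟩⟩ := h
  have ht : ∀ k, t k ∈ Set.range f := fun k =>
    hf ⟨f a, rfl, hi ▸ closeLE_one_of_relMap hR i k⟩
  choose s hs using ht
  obtain rfl : f ∘ s = t := funext hs
  exact ⟨ne_of_apply_ne f hne, n, R, s, (f.map_rel R s).1 hR,
    ⟨i, f.injective hi⟩, ⟨j, f.injective hj⟩⟩

lemma CloseLE.of_map {f : M ↪[L] N} {r : ℕ} {a b : M} (hf : setBall L {f a} r ⊆ Set.range f)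
    (h : CloseLE L N r (f a) (f b)) : CloseLE L M r a b := by
  induction r generalizing b with
  | zero => exact f.injective h
  | succ r ih =>
    have hf' : setBall L {f a} r ⊆ Set.range f := (setBall_mono le_rfl r.le_succ).trans hf
    rcases h with h | ⟨d, had, hdb⟩
    · exact Or.inl (ih hf' h)
    · obtain ⟨c, rfl⟩ := hf' ⟨f a, rfl, had⟩
      have hc : {f c} ⊆ setBall L {f a} r := Set.singleton_subset_iff.2 ⟨f a, rfl, had⟩
      have hball : setBall L {f c} 1 ⊆ Set.range f :=
        ((setBall_mono hc le_rfl).trans (setBall_setBall_subset _ r 1)).trans hf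
      exact Or.inr ⟨c, ih hf' had, hdb.of_map hball⟩

lemma setBall_image {f : M ↪[L] N} {A : Set M} {r : ℕ} (hf : setBall L (f '' A) r ⊆ Set.range f) :
    setBall L (f '' A) r = f '' setBall L A r := by
  ext y
  constructor
  · intro hy
    obtain ⟨x, rfl⟩ := hf hy
    obtain ⟨_, ⟨a, ha, rfl⟩, hax⟩ := hy
    have ha' : {f a} ⊆ f '' A := Set.singleton_subset_iff.2 ⟨a, ha, rfl⟩
    exact ⟨x, ⟨a, ha, hax.of_map ((setBall_mono ha' le_rfl).trans hf)⟩, rfl⟩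
  · rintro ⟨x, ⟨a, ha, hax⟩, rfl⟩
    exact ⟨f a, ⟨a, ha, rfl⟩, hax.map f⟩

variable (L) in
/-- A set closed under Gaifman adjacency, that is, a union of connected components of the
Gaifman graph. -/
def IsGaifmanClosed (s : Set M) : Prop :=
  ∀ a ∈ s, ∀ b, Adj L M a b → b ∈ s

lemma IsGaifmanClosed.setBall_subset {s A : Set M} (hs : IsGaifmanClosed L s) (hA : A ⊆ s)
    (r : ℕ) : setBall L A r ⊆ s := by
  rintro b ⟨a, ha, h⟩
  induction r generalizing b with
  | zero => exact h ▸ hA ha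
  | succ r ih =>
    rcases h with h | ⟨d, had, hdb⟩
    · exact ih h
    · exact hs d (ih had) b hdb

end Distance

/-! ### Local formulas -/

section Local

variable {L : FirstOrder.Language.{u, u}} [L.IsRelational]

lemma IsLocal.realize_comp_iff {M N : Type u} [L.Structure M] [L.Structure N] {r m : ℕ}
    {τ : L.Formula (Fin m)} (hτ : IsLocal r τ) (f : M ↪[L] N) (a : Fin m → M)
    (hf : Ball L (f ∘ a) r ⊆ Set.range f) : τ.Realize (f ∘ a) ↔ τ.Realize a := by
  rw [hτ M a, hτ N (f ∘ a)]
  let _ := inducedStructure L (Ball L a r)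
  let _ := inducedStructure L (Ball L (f ∘ a) r)
  have himage : f '' Ball L a r = Ball L (f ∘ a) r := by
    rw [ball_eq_setBall, Set.range_comp] at hf
    rw [ball_eq_setBall, ball_eq_setBall, Set.range_comp, setBall_image hf]
  let e : Ball L a r ≃[L] Ball L (f ∘ a) r :=
    { (Equiv.Set.image f _ f.injective).trans (Equiv.setCongr himage) with
      map_fun' := fun F _ => isEmptyElim F
      map_rel' := fun R x => f.map_rel R fun i => (x i : M) }
  exact StrongHomClass.realize_formula e τ
    (v := fun i => (⟨a i, self_mem_ball L a r i⟩ : Ball L a r))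

lemma isLocal_of_realize_comp_iff {r m : ℕ} {τ : L.Formula (Fin m)}
    (h : ∀ (M N : Type u) [L.Structure M] [L.Structure N] (f : M ↪[L] N) (a : Fin m → M),
      Ball L (f ∘ a) r ⊆ Set.range f → (τ.Realize (f ∘ a) ↔ τ.Realize a)) : IsLocal r τ := by
  intro M _ a
  let _ := inducedStructure L (Ball L a r)
  let incl : Ball L a r ↪[L] M :=
    { Function.Embedding.subtype (· ∈ Ball L a r) with
      map_fun' := fun F _ => isEmptyElim F
      map_rel' := fun _ _ => Iff.rfl }
  exact h _ M incl (fun i => ⟨a i, self_mem_ball L a r i⟩) fun x hx => ⟨⟨x, hx⟩, rfl⟩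

lemma IsLocal.mono {r s m : ℕ} (hrs : r ≤ s) {τ : L.Formula (Fin m)} (hτ : IsLocal r τ) :
    IsLocal s τ :=
  isLocal_of_realize_comp_iff fun _ _ _ _ f a hf =>
    hτ.realize_comp_iff f a fun _ ⟨i, hi⟩ => hf ⟨i, hi.mono hrs⟩

lemma IsLocal.relabel {r m n : ℕ} {τ : L.Formula (Fin m)} (hτ : IsLocal r τ)
    (g : Fin m → Fin n) : IsLocal r (τ.relabel g) :=
  isLocal_of_realize_comp_iff fun _ _ _ _ f a hf => by
    rw [Formula.realize_relabel, Formula.realize_relabel]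
    exact hτ.realize_comp_iff f (a ∘ g) fun _ ⟨i, hi⟩ => hf ⟨g i, hi⟩

lemma IsLocal.not {r m : ℕ} {τ : L.Formula (Fin m)} (hτ : IsLocal r τ) : IsLocal r τ.not :=
  fun M _ a => not_congr (hτ M a)

lemma isLocal_iInf {ι : Type*} [Finite ι] {r m : ℕ} {τ : ι → L.Formula (Fin m)}
    (hτ : ∀ i, IsLocal r (τ i)) : IsLocal r (Formula.iInf τ) := fun M _ a => by
  simp only [Formula.realize_iInf, fun i => hτ i M a]

lemma isLocal_iSup {ι : Type*} [Finite ι] {r m : ℕ} {τ : ι → L.Formula (Fin m)}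
    (hτ : ∀ i, IsLocal r (τ i)) : IsLocal r (Formula.iSup τ) := fun M _ a => by
  simp only [Formula.realize_iSup, fun i => hτ i M a]

lemma isLocal_equal {m : ℕ} (i j : Fin m) :
    IsLocal (L := L) 0 ((Term.var i).equal (Term.var j)) :=
  isLocal_of_realize_comp_iff fun _ _ _ _ f a _ => by
    simp only [Formula.realize_equal, Term.realize_var, Function.comp_apply, f.injective.eq_iff]

lemma isLocal_rel {n m : ℕ} (R : L.Relations n) (g : Fin n → Fin m) :
    IsLocal 0 (R.formula fun i => Term.var (g i)) :=
  isLocal_of_realize_comp_iff fun _ _ _ _ f a _ => by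
    simp only [Formula.realize_rel, Term.realize_var]
    exact f.map_rel R (a ∘ g)

end Local

section LocalQuantifier

variable {L : FirstOrder.Language.{u, u}} [Finite (Σ n, L.Relations n)] {α : Type}

/-- The formula stating that the variables `i` and `j` are adjacent in the Gaifman graph. -/
noncomputable def adjFormula (i j : α) : L.Formula α :=
  ((Term.var i).equal (Term.var j)).not ⊓
    Formula.iSup fun R : Σ n, L.Relations n =>
      Formula.iExs (Fin R.1) <|
        R.2.formula (fun k => Term.var (Sum.inr k)) ⊓
          (Formula.iSup (fun k => (Term.var (Sum.inr k)).equal (Term.var (Sum.inl i))) ⊓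
            Formula.iSup fun k => (Term.var (Sum.inr k)).equal (Term.var (Sum.inl j)))

lemma realize_adjFormula {M : Type u} [L.Structure M] {i j : α} {v : α → M} :
    (adjFormula i j : L.Formula α).Realize v ↔ Adj L M (v i) (v j) := by
  simp only [adjFormula, Adj, Formula.realize_inf, Formula.realize_not, Formula.realize_equal,
    Formula.realize_iSup, Formula.realize_iExs, Formula.realize_rel, Term.realize_var,
    Sum.elim_inl, Sum.elim_inr, Sigma.exists, Set.mem_range, ne_eq]

/-- The formula stating that the variables `i` and `j` are at Gaifman distance at most `r`. -/
noncomputable def closeFormula : ℕ → ∀ {α : Type}, α → α → L.Formula α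
  | 0, _, i, j => (Term.var i).equal (Term.var j)
  | r + 1, _, i, j => closeFormula r i j ⊔
      Formula.iExs Unit (closeFormula r (Sum.inl i) (Sum.inr ()) ⊓
        adjFormula (Sum.inr ()) (Sum.inl j))

lemma realize_closeFormula {M : Type u} [L.Structure M] {r : ℕ} {i j : α} {v : α → M} :
    (closeFormula r i j : L.Formula α).Realize v ↔ CloseLE L M r (v i) (v j) := by
  induction r generalizing α with
  | zero => simp only [closeFormula, CloseLE, Formula.realize_equal, Term.realize_var]
  | succ r ih =>
    simp only [closeFormula, CloseLE, Formula.realize_sup, Formula.realize_iExs,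
      Formula.realize_inf, realize_adjFormula, ih, Sum.elim_inl, Sum.elim_inr]
    exact or_congr_right (Equiv.funUnique Unit M).exists_congr_left

/-- The local existential quantifier: `nearEx s θ` states that some element at Gaifman distance
at most `s` from the free variables satisfies `θ` as the last variable. -/
noncomputable def nearEx {m : ℕ} (s : ℕ) (θ : L.Formula (Fin (m + 1))) : L.Formula (Fin m) :=
  Formula.iExs Unit <|
    (θ ⊓ Formula.iSup fun i : Fin m => closeFormula s i.castSucc (Fin.last m)).relabel
      (Fin.snoc Sum.inl (Sum.inr ()) : Fin (m + 1) → Fin m ⊕ Unit)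

lemma realize_nearEx {M : Type u} [L.Structure M] {m s : ℕ} {θ : L.Formula (Fin (m + 1))}
    {v : Fin m → M} : (nearEx s θ).Realize v ↔
      ∃ y ∈ Ball L v s, θ.Realize (Fin.snoc v y : Fin (m + 1) → M) := by
  simp only [nearEx, Formula.realize_iExs, Formula.realize_relabel, Fin.comp_snoc,
    Sum.elim_comp_inl, Sum.elim_inr, Formula.realize_inf, Formula.realize_iSup,
    realize_closeFormula, Fin.snoc_castSucc, Fin.snoc_last]
  refine (Equiv.funUnique Unit M).exists_congr_left.trans (exists_congr fun y => ?_)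
  exact and_comm

lemma IsLocal.nearEx [L.IsRelational] {m r : ℕ} {θ : L.Formula (Fin (m + 1))} (hθ : IsLocal r θ)
    (s : ℕ) : IsLocal (s + r) (nearEx s θ) := by
  refine isLocal_of_realize_comp_iff fun M N _ _ f v hf => ?_
  have hball : Ball L (f ∘ v) s = f '' Ball L v s := by
    have hf' : setBall L (f '' Set.range v) s ⊆ Set.range f := by
      rw [← Set.range_comp, ← ball_eq_setBall]
      exact fun _ ⟨i, hi⟩ => hf ⟨i, hi.mono (Nat.le_add_right s r)⟩
    rw [ball_eq_setBall, ball_eq_setBall, Set.range_comp, setBall_image hf']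
  simp only [realize_nearEx, hball, Set.exists_mem_image, ← Fin.comp_snoc]
  refine exists_congr fun x => and_congr_right fun ⟨i, hi⟩ => hθ.realize_comp_iff f _ ?_
  rintro y ⟨k, hk⟩
  cases k using Fin.lastCases with
  | last => exact hf ⟨i, (hi.map f).trans (by simpa using hk)⟩
  | cast k => exact hf ⟨k, CloseLE.mono (Nat.le_add_left r s) (by simpa using hk)⟩

end LocalQuantifier

/-! ### Local back-and-forth equivalence -/

section LocalBackAndForth

variable {L : FirstOrder.Language.{u, u}} {M N : Type u} [L.Structure M] [L.Structure N]

variable (L) in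
/-- A partial isomorphism between two structures, given by its graph. -/
def IsPartialIso (P : Set (M × N)) : Prop :=
  (∀ p ∈ P, ∀ p' ∈ P, p.1 = p'.1 ↔ p.2 = p'.2) ∧
    ∀ (n : ℕ) (R : L.Relations n) (t : Fin n → M × N), (∀ i, t i ∈ P) →
      (Structure.RelMap R (fun i => (t i).1) ↔ Structure.RelMap R (fun i => (t i).2))

lemma isPartialIso_of_diagonal {P : Set (M × M)} (hP : ∀ p ∈ P, p.1 = p.2) :
    IsPartialIso L P := by
  refine ⟨fun p hp p' hp' => by rw [hP p hp, hP p' hp'], fun n R t ht => ?_⟩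
  rw [funext fun i => hP (t i) (ht i)]

lemma IsPartialIso.swap {P : Set (M × N)} (h : IsPartialIso L P) :
    IsPartialIso L (Prod.swap '' P) := by
  constructor
  · rintro _ ⟨p, hp, rfl⟩ _ ⟨p', hp', rfl⟩
    exact (h.1 p hp p' hp').symm
  · intro n R t ht
    choose s hs hst using ht
    obtain rfl : (fun i => (s i).swap) = t := funext hst
    exact (h.2 n R s hs).symm

lemma IsPartialIso.map {M' N' : Type u} [L.Structure M'] [L.Structure N'] (f : M ↪[L] M')
    (g : N ↪[L] N') {P : Set (M × N)} (h : IsPartialIso L P) :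
    IsPartialIso L (Prod.map f g '' P) := by
  constructor
  · rintro _ ⟨p, hp, rfl⟩ _ ⟨p', hp', rfl⟩
    exact f.injective.eq_iff.trans ((h.1 p hp p' hp').trans g.injective.eq_iff.symm)
  · intro n R t ht
    choose s hs hst using ht
    obtain rfl : (fun i => Prod.map f g (s i)) = t := funext hst
    exact (f.map_rel R _).trans ((h.2 n R s hs).trans (g.map_rel R _).symm)

lemma IsPartialIso.union {P P' : Set (M × N)} (h : IsPartialIso L P) (h' : IsPartialIso L P')
    (hfst : Disjoint (setBall L (Prod.fst '' P) 1) (Prod.fst '' P'))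
    (hsnd : Disjoint (setBall L (Prod.snd '' P) 1) (Prod.snd '' P')) :
    IsPartialIso L (P ∪ P') := by
  have far₁ : ∀ p ∈ P, ∀ p' ∈ P', ¬ CloseLE L M 1 p.1 p'.1 := fun p hp p' hp' hc =>
    Set.disjoint_left.1 hfst ⟨p.1, ⟨p, hp, rfl⟩, hc⟩ ⟨p', hp', rfl⟩
  have far₂ : ∀ p ∈ P, ∀ p' ∈ P', ¬ CloseLE L N 1 p.2 p'.2 := fun p hp p' hp' hc =>
    Set.disjoint_left.1 hsnd ⟨p.2, ⟨p, hp, rfl⟩, hc⟩ ⟨p', hp', rfl⟩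
  constructor
  · rintro p (hp | hp) p' (hp' | hp')
    · exact h.1 p hp p' hp'
    · exact iff_of_false (fun e => far₁ p hp p' hp' (Or.inl e))
        fun e => far₂ p hp p' hp' (Or.inl e)
    · exact iff_of_false (fun e => far₁ p' hp' p hp (Or.inl e.symm))
        fun e => far₂ p' hp' p hp (Or.inl e.symm)
    · exact h'.1 p hp p' hp'
  · intro n R t ht
    by_cases hall : ∀ i, t i ∈ P
    · exact h.2 n R t hall
    by_cases hall' : ∀ i, t i ∈ P'
    · exact h'.2 n R t hall'
    push Not at hall hall'
    obtain ⟨⟨i, hi⟩, j, hj⟩ := And.intro hall hall'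
    have hi' : t i ∈ P' := (ht i).resolve_left hi
    have hj' : t j ∈ P := (ht j).resolve_right hj
    exact iff_of_false (fun hR => far₁ _ hj' _ hi' (closeLE_one_of_relMap hR j i))
      fun hR => far₂ _ hj' _ hi' (closeLE_one_of_relMap hR j i)

variable (L) in
/-- The two sides of `P` cannot be told apart in a `q`-round back-and-forth game in which,
with `i + 1` rounds to go, the moves have to stay within distance `2 ^ i` of the elements
chosen so far. -/
def LocalBF : ℕ → Set (M × N) → Prop
  | 0, P => IsPartialIso L P
  | q + 1, P => LocalBF q P ∧
      (∀ c ∈ setBall L (Prod.fst '' P) (2 ^ q),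
        ∃ d ∈ setBall L (Prod.snd '' P) (2 ^ q), LocalBF q (insert (c, d) P)) ∧
      ∀ d ∈ setBall L (Prod.snd '' P) (2 ^ q),
        ∃ c ∈ setBall L (Prod.fst '' P) (2 ^ q), LocalBF q (insert (c, d) P)

lemma LocalBF.mono {q q' : ℕ} (hq : q' ≤ q) {P : Set (M × N)} (h : LocalBF L q P) :
    LocalBF L q' P := by
  induction hq with
  | refl => exact h
  | step _ ih => exact ih h.1

lemma localBF_of_diagonal {q : ℕ} {P : Set (M × M)} (hP : ∀ p ∈ P, p.1 = p.2) :
    LocalBF L q P := by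
  induction q generalizing P with
  | zero => exact isPartialIso_of_diagonal hP
  | succ q ih =>
    have hfst : Prod.fst '' P = Prod.snd '' P := Set.image_congr hP
    have hinsert : ∀ c : M, LocalBF L q (insert (c, c) P) := fun c =>
      ih (Set.forall_mem_insert.2 ⟨rfl, hP⟩)
    exact ⟨ih hP, fun c hc => ⟨c, hfst ▸ hc, hinsert c⟩, fun c hc => ⟨c, hfst ▸ hc, hinsert c⟩⟩

lemma LocalBF.swap {q : ℕ} {P : Set (M × N)} (h : LocalBF L q P) :
    LocalBF L q (Prod.swap '' P) := by
  induction q generalizing P with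
  | zero => exact IsPartialIso.swap h
  | succ q ih =>
    obtain ⟨hP, hforth, hback⟩ := h
    have hinsert : ∀ c d, LocalBF L q (insert (c, d) P) →
        LocalBF L q (insert (d, c) (Prod.swap '' P)) := fun c d hcd => by
      simpa only [Set.image_insert_eq, Prod.swap_prod_mk] using ih hcd
    refine ⟨ih hP, ?_, ?_⟩ <;> simp only [Set.image_image, Prod.fst_swap, Prod.snd_swap]
    · intro d hd
      obtain ⟨c, hc, hcd⟩ := hback d hd
      exact ⟨c, hc, hinsert c d hcd⟩
    · intro c hc
      obtain ⟨d, hd, hcd⟩ := hforth c hc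
      exact ⟨d, hd, hinsert c d hcd⟩

lemma LocalBF.map {M' N' : Type u} [L.Structure M'] [L.Structure N'] {f : M ↪[L] M'}
    {g : N ↪[L] N'} (hf : IsGaifmanClosed L (Set.range f)) (hg : IsGaifmanClosed L (Set.range g))
    {q : ℕ} {P : Set (M × N)} (h : LocalBF L q P) : LocalBF L q (Prod.map f g '' P) := by
  induction q generalizing P with
  | zero => exact IsPartialIso.map f g h
  | succ q ih =>
    obtain ⟨hP, hforth, hback⟩ := h
    have hinsert : ∀ c d, LocalBF L q (insert (c, d) P) →
        LocalBF L q (insert (f c, g d) (Prod.map f g '' P)) := fun c d hcd => by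
      simpa only [Set.image_insert_eq, Prod.map_apply] using ih hcd
    have hball₁ : setBall L (Prod.fst '' (Prod.map f g '' P)) (2 ^ q) =
        f '' setBall L (Prod.fst '' P) (2 ^ q) := by
      rw [← setBall_image (hf.setBall_subset (Set.image_subset_range _ _) _), Set.image_image,
        Set.image_image]
      rfl
    have hball₂ : setBall L (Prod.snd '' (Prod.map f g '' P)) (2 ^ q) =
        g '' setBall L (Prod.snd '' P) (2 ^ q) := by
      rw [← setBall_image (hg.setBall_subset (Set.image_subset_range _ _) _), Set.image_image,
        Set.image_image]
      rfl
    refine ⟨ih hP, ?_, ?_⟩ <;> rw [hball₁, hball₂]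
    · rintro _ ⟨c, hc, rfl⟩
      obtain ⟨d, hd, hcd⟩ := hforth c hc
      exact ⟨g d, ⟨d, hd, rfl⟩, hinsert c d hcd⟩
    · rintro _ ⟨d, hd, rfl⟩
      obtain ⟨c, hc, hcd⟩ := hback d hd
      exact ⟨f c, ⟨c, hc, rfl⟩, hinsert c d hcd⟩

-- Far-apart games do not interfere: a move of the `q`-round game enlarges the radius-`2 ^ q`
-- neighborhood of one part only within its radius-`2 ^ (q + 1)` neighborhood.
lemma LocalBF.union {q : ℕ} {P P' : Set (M × N)} (h : LocalBF L q P) (h' : LocalBF L q P')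
    (hfst : Disjoint (setBall L (Prod.fst '' P) (2 ^ q)) (Prod.fst '' P'))
    (hsnd : Disjoint (setBall L (Prod.snd '' P) (2 ^ q)) (Prod.snd '' P')) :
    LocalBF L q (P ∪ P') := by
  induction q generalizing P P' with
  | zero => exact IsPartialIso.union h h' hfst hsnd
  | succ q ih =>
    rw [pow_succ, mul_two] at hfst hsnd
    have insert_left : ∀ {P P' : Set (M × N)} {c d},
        Disjoint (setBall L (Prod.fst '' P) (2 ^ q + 2 ^ q)) (Prod.fst '' P') →
        Disjoint (setBall L (Prod.snd '' P) (2 ^ q + 2 ^ q)) (Prod.snd '' P') →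
        c ∈ setBall L (Prod.fst '' P) (2 ^ q) → d ∈ setBall L (Prod.snd '' P) (2 ^ q) →
        LocalBF L q (insert (c, d) P) → LocalBF L q P' →
        LocalBF L q (insert (c, d) (P ∪ P')) := by
      intro P P' c d hfst hsnd hc hd hcd hP'
      rw [← Set.insert_union]
      refine ih hcd hP' ?_ ?_ <;> rw [Set.image_insert_eq]
      · exact hfst.mono_left (setBall_insert_subset hc _)
      · exact hsnd.mono_left (setBall_insert_subset hd _)
    have hle : 2 ^ q ≤ 2 ^ q + 2 ^ q := Nat.le_add_right _ _
    refine ⟨ih h.1 h'.1 (hfst.mono_left (setBall_mono le_rfl hle))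
      (hsnd.mono_left (setBall_mono le_rfl hle)), ?_, ?_⟩ <;>
      simp only [Set.image_union, setBall_union]
    · rintro c (hc | hc)
      · obtain ⟨d, hd, hcd⟩ := h.2.1 c hc
        exact ⟨d, Or.inl hd, insert_left hfst hsnd hc hd hcd h'.1⟩
      · obtain ⟨d, hd, hcd⟩ := h'.2.1 c hc
        exact ⟨d, Or.inr hd, Set.union_comm P' P ▸ insert_left (disjoint_setBall_symm hfst)
          (disjoint_setBall_symm hsnd) hc hd hcd h.1⟩
    · rintro d (hd | hd)
      · obtain ⟨c, hc, hcd⟩ := h.2.2 d hd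
        exact ⟨c, Or.inl hc, insert_left hfst hsnd hc hd hcd h'.1⟩
      · obtain ⟨c, hc, hcd⟩ := h'.2.2 d hd
        exact ⟨c, Or.inr hc, Set.union_comm P' P ▸ insert_left (disjoint_setBall_symm hfst)
          (disjoint_setBall_symm hsnd) hc hd hcd h.1⟩

end LocalBackAndForth

/-! ### Ehrenfeucht–Fraïssé equivalence -/

section EhrenfeuchtFraisse

variable {L : FirstOrder.Language.{u, u}} {M N : Type u} [L.Structure M] [L.Structure N]

variable (L) in
/-- The two sides of `P` cannot be told apart in a `q`-round Ehrenfeucht–Fraïssé game. -/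
def BackForth : ℕ → Set (M × N) → Prop
  | 0, P => IsPartialIso L P
  | q + 1, P => IsPartialIso L P ∧ (∀ c, ∃ d, BackForth q (insert (c, d) P)) ∧
      ∀ d, ∃ c, BackForth q (insert (c, d) P)

lemma BackForth.isPartialIso {q : ℕ} {P : Set (M × N)} (h : BackForth L q P) :
    IsPartialIso L P := by
  cases q with
  | zero => exact h
  | succ q => exact h.1

/-- The set of pairs of corresponding components of two tuples. -/
def pairSet {m : ℕ} (v : Fin m → M) (w : Fin m → N) : Set (M × N) :=
  Set.range fun i => (v i, w i)

lemma fst_image_pairSet {m : ℕ} (v : Fin m → M) (w : Fin m → N) :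
    Prod.fst '' pairSet v w = Set.range v := (Set.range_comp _ _).symm

lemma snd_image_pairSet {m : ℕ} (v : Fin m → M) (w : Fin m → N) :
    Prod.snd '' pairSet v w = Set.range w := (Set.range_comp _ _).symm

lemma pairSet_snoc {m : ℕ} (v : Fin m → M) (w : Fin m → N) (c : M) (d : N) :
    pairSet (Fin.snoc v c : Fin (m + 1) → M) (Fin.snoc w d : Fin (m + 1) → N) =
      insert (c, d) (pairSet v w) := by
  ext p
  simp only [pairSet, Set.mem_range, Set.mem_insert_iff, Fin.exists_fin_succ', Fin.snoc_castSucc,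
    Fin.snoc_last, or_comm, eq_comm]

lemma exists_eq_var_of_isRelational [L.IsRelational] {α : Type} (t : L.Term α) :
    ∃ i, t = Term.var i := by
  cases t with
  | var i => exact ⟨i, rfl⟩
  | func f _ => exact isEmptyElim f

lemma BackForth.realize_iff [L.IsRelational] {m q : ℕ} {ψ : L.BoundedFormula Empty m}
    (hψ : qr ψ ≤ q) {v : Fin m → M} {w : Fin m → N} (h : BackForth L q (pairSet v w)) :
    ψ.Realize default v ↔ ψ.Realize default w := by
  induction ψ generalizing q with
  | falsum => exact Iff.rfl
  | equal t₁ t₂ =>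
    obtain ⟨_ | i, rfl⟩ := exists_eq_var_of_isRelational t₁
    · contradiction
    obtain ⟨_ | j, rfl⟩ := exists_eq_var_of_isRelational t₂
    · contradiction
    exact h.isPartialIso.1 _ ⟨i, rfl⟩ _ ⟨j, rfl⟩
  | rel R ts =>
    have hvar : ∀ i, ∃ j, ts i = Term.var (Sum.inr j) := fun i => by
      obtain ⟨_ | j, hj⟩ := exists_eq_var_of_isRelational (ts i)
      · contradiction
      · exact ⟨j, hj⟩
    choose g hg using hvar
    obtain rfl : (fun i => Term.var (Sum.inr (g i))) = ts := funext fun i => (hg i).symm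
    exact h.isPartialIso.2 _ R (fun i => (v (g i), w (g i))) fun i => ⟨g i, rfl⟩
  | imp f g ihf ihg =>
    exact imp_congr (ihf ((le_max_left _ _).trans hψ) h) (ihg ((le_max_right _ _).trans hψ) h)
  | all f ih =>
    obtain _ | q := q
    · exact absurd hψ (Nat.not_succ_le_zero _)
    have hf : ∀ c d, BackForth L q (insert (c, d) (pairSet v w)) →
        (f.Realize default (Fin.snoc v c) ↔ f.Realize default (Fin.snoc w d)) := fun c d hcd =>
      ih (Nat.le_of_succ_le_succ hψ) (pairSet_snoc v w c d ▸ hcd)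
    obtain ⟨-, hforth, hback⟩ := h
    constructor
    · intro hv d
      obtain ⟨c, hcd⟩ := hback d
      exact (hf c d hcd).1 (hv c)
    · intro hw c
      obtain ⟨d, hcd⟩ := hforth c
      exact (hf c d hcd).2 (hw d)

variable (L M N) in
/-- Every element of `M` has locally equivalent copies in `N` outside the connected components
of any given set of fewer than `K` elements. -/
def HasFarCopies (K : ℕ) : Prop :=
  ∀ s : Set N, s.encard < K → ∀ c : M, ∃ d : N, LocalBF L K {(c, d)} ∧ ∀ r, d ∉ setBall L s r

lemma LocalBF.exists_insert {q K : ℕ} {P : Set (M × N)} (h : LocalBF L (q + 1) P)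
    (hMN : HasFarCopies L M N K) (hq : q ≤ K) (hP : P.encard < K) (c : M) :
    ∃ d, LocalBF L q (insert (c, d) P) := by
  by_cases hc : c ∈ setBall L (Prod.fst '' P) (2 ^ q)
  · obtain ⟨d, -, hd⟩ := h.2.1 c hc
    exact ⟨d, hd⟩
  · obtain ⟨d, hcd, hd⟩ := hMN (Prod.snd '' P) ((Set.encard_image_le _ _).trans_lt hP) c
    refine ⟨d, ?_⟩
    rw [← Set.union_singleton]
    refine h.1.union (hcd.mono hq) ?_ ?_ <;>
      rw [Set.image_singleton, Set.disjoint_singleton_right]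
    exacts [hc, hd _]

lemma LocalBF.backForth {q K : ℕ} {P : Set (M × N)} (h : LocalBF L q P)
    (hMN : HasFarCopies L M N K) (hNM : HasFarCopies L N M K) (hP : P.encard + q ≤ K) :
    BackForth L q P := by
  induction q generalizing P with
  | zero => exact h
  | succ q ih =>
    have hK : P.encard + 1 + q ≤ K := by
      rwa [Nat.cast_succ, add_comm (q : ℕ∞), ← add_assoc] at hP
    have hq : q ≤ K := by exact_mod_cast le_add_self.trans hK
    have hlt : P.encard < K :=
      (ENat.add_one_le_iff (ne_top_of_le_ne_top (ENat.natCast_ne_top K)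
        (le_self_add.trans hP))).1 (le_self_add.trans hK)
    have hinsert : ∀ p, (insert p P).encard + q ≤ K := fun p =>
      (add_le_add_left (Set.encard_insert_le P p) _).trans hK
    refine ⟨h.mono (Nat.zero_le _), fun c => ?_, fun d => ?_⟩
    · obtain ⟨d, hcd⟩ := h.exists_insert hMN hq hlt c
      exact ⟨d, ih hcd (hinsert _)⟩
    · obtain ⟨c, hdc⟩ := h.swap.exists_insert hNM hq ((Set.encard_image_le _ _).trans_lt hlt) d
      have hcd : LocalBF L q (insert (c, d) P) := by
        simpa only [Set.image_insert_eq, Prod.swap_prod_mk, Set.image_image, Prod.swap_swap,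
          Set.image_id'] using hdc.swap
      exact ⟨c, ih hcd (hinsert _)⟩

variable (L M) in
/-- The nullary relations that hold in a structure. -/
def nullaryRels : Set (L.Relations 0) :=
  {R | Structure.RelMap R (default : Fin 0 → M)}

lemma relMap_iff_mem_nullaryRels (R : L.Relations 0) (t : Fin 0 → M) :
    Structure.RelMap R t ↔ R ∈ nullaryRels L M := by
  rw [Subsingleton.elim t default]
  rfl

lemma nullaryRels_eq_of_embedding (f : M ↪[L] N) : nullaryRels L M = nullaryRels L N :=
  Set.ext fun R => (f.map_rel R default).symm.trans (relMap_iff_mem_nullaryRels R _)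

lemma LocalBF.nullaryRels_eq {q : ℕ} {P : Set (M × N)} (h : LocalBF L q P) :
    nullaryRels L M = nullaryRels L N := by
  have hP : IsPartialIso L P := h.mono (Nat.zero_le q)
  ext R
  simpa only [relMap_iff_mem_nullaryRels] using hP.2 0 R default finZeroElim

lemma localBF_empty (h : nullaryRels L M = nullaryRels L N) (q : ℕ) :
    LocalBF L q (∅ : Set (M × N)) := by
  induction q with
  | zero =>
    refine ⟨fun p hp => hp.elim, fun n R t ht => ?_⟩
    cases n with
    | zero => rw [relMap_iff_mem_nullaryRels, relMap_iff_mem_nullaryRels, h]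
    | succ n => exact (ht 0).elim
  | succ q ih => exact ⟨ih, by simp [setBall], by simp [setBall]⟩

theorem realize_sentence_iff_of_hasFarCopies [L.IsRelational] {φ : L.Sentence} {K : ℕ}
    (hφ : qr φ ≤ K) (hnull : nullaryRels L M = nullaryRels L N) (hMN : HasFarCopies L M N K)
    (hNM : HasFarCopies L N M K) : M ⊨ φ ↔ N ⊨ φ := by
  have hempty : pairSet (default : Fin 0 → M) (default : Fin 0 → N) = ∅ := Set.range_eq_empty _
  refine BackForth.realize_iff hφ (LocalBF.backForth (K := K) ?_ hMN hNM ?_) <;> rw [hempty]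
  · exact localBF_empty hnull K
  · rw [Set.encard_empty, zero_add]

end EhrenfeuchtFraisse

/-! ### Types over a finite set of local formulas -/

section Types

variable {L : FirstOrder.Language.{u, u}} {M N : Type u} [L.Structure M] [L.Structure N]

/-- The type of a tuple over `Θ`: the formulas in `Θ` that it satisfies. -/
def typeIn {m : ℕ} (Θ : Set (L.Formula (Fin m))) (v : Fin m → M) : Set Θ :=
  {θ | θ.1.Realize v}

lemma typeIn_eq_typeIn_iff {m : ℕ} {Θ : Set (L.Formula (Fin m))} {v : Fin m → M}
    {w : Fin m → N} : typeIn Θ v = typeIn Θ w ↔ ∀ θ ∈ Θ, (θ.Realize v ↔ θ.Realize w) := by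
  rw [Set.ext_iff, Subtype.forall]
  rfl

open Classical in
/-- The formula stating that the type over `Θ` is `S`. -/
noncomputable def typeFormula {m : ℕ} (Θ : Set (L.Formula (Fin m))) [Finite Θ] (S : Set Θ) :
    L.Formula (Fin m) :=
  Formula.iInf fun θ : Θ => if θ ∈ S then θ.1 else θ.1.not

lemma realize_typeFormula {m : ℕ} {Θ : Set (L.Formula (Fin m))} [Finite Θ] {S : Set Θ}
    {v : Fin m → M} : (typeFormula Θ S).Realize v ↔ typeIn Θ v = S := by
  rw [typeFormula, Formula.realize_iInf, Set.ext_iff]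
  refine forall_congr' fun θ => ?_
  split_ifs with hθ
  · exact (iff_true_right hθ).symm
  · rw [Formula.realize_not]
    exact (iff_false_right hθ).symm

lemma isLocal_typeFormula [L.IsRelational] {m r : ℕ} {Θ : Set (L.Formula (Fin m))} [Finite Θ]
    (hΘ : ∀ θ ∈ Θ, IsLocal r θ) (S : Set Θ) : IsLocal r (typeFormula Θ S) := by
  refine isLocal_iInf fun θ => ?_
  split_ifs
  exacts [hΘ θ θ.2, (hΘ θ θ.2).not]

variable (L) in
/-- The atomic formulas in the variables `Fin m` over a relational language. -/
def atomicFormulas (m : ℕ) : Set (L.Formula (Fin m)) :=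
  (Set.range fun ij : Fin m × Fin m => (Term.var ij.1).equal (Term.var ij.2)) ∪
    Set.range fun R : (Σ R : (Σ n, L.Relations n), (Fin R.1 → Fin m)) =>
      R.1.2.formula fun i => Term.var (R.2 i)

lemma isLocal_of_mem_atomicFormulas [L.IsRelational] {m : ℕ} {θ : L.Formula (Fin m)}
    (hθ : θ ∈ atomicFormulas L m) : IsLocal 0 θ := by
  obtain ⟨ij, rfl⟩ | ⟨R, rfl⟩ := hθ
  exacts [isLocal_equal ij.1 ij.2, isLocal_rel R.1.2 R.2]

lemma isPartialIso_pairSet {m : ℕ} {v : Fin m → M} {w : Fin m → N}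
    (h : ∀ θ ∈ atomicFormulas L m, (θ.Realize v ↔ θ.Realize w)) :
    IsPartialIso L (pairSet v w) := by
  constructor
  · rintro _ ⟨i, rfl⟩ _ ⟨j, rfl⟩
    simpa only [Formula.realize_equal, Term.realize_var] using h _ (Or.inl ⟨(i, j), rfl⟩)
  · intro n R t ht
    choose g hg using ht
    obtain rfl : (fun i => (v (g i), w (g i))) = t := funext hg
    simpa only [Formula.realize_rel, Term.realize_var] using h _ (Or.inr ⟨⟨⟨n, R⟩, g⟩, rfl⟩)

variable [Finite (Σ n, L.Relations n)]

lemma exists_typeIn_snoc_eq {m s : ℕ} {Θ : Set (L.Formula (Fin (m + 1)))} [Finite Θ]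
    {v : Fin m → M} {w : Fin m → N}
    (h : ∀ S : Set Θ, (nearEx s (typeFormula Θ S)).Realize v →
      (nearEx s (typeFormula Θ S)).Realize w) {c : M} (hc : c ∈ Ball L v s) :
    ∃ d ∈ Ball L w s, typeIn Θ (Fin.snoc v c : Fin (m + 1) → M) =
      typeIn Θ (Fin.snoc w d : Fin (m + 1) → N) := by
  obtain ⟨d, hd, hcd⟩ :=
    realize_nearEx.1 (h _ (realize_nearEx.2 ⟨c, hc, realize_typeFormula.2 rfl⟩))
  exact ⟨d, hd, (realize_typeFormula.1 hcd).symm⟩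

lemma localBF_succ_pairSet {m q : ℕ} {Θ : Set (L.Formula (Fin m))}
    {Θ' : Set (L.Formula (Fin (m + 1)))} [Finite Θ']
    (hΘ : ∀ (v : Fin m → M) (w : Fin m → N), typeIn Θ v = typeIn Θ w →
      LocalBF L q (pairSet v w))
    (hΘ' : ∀ (v : Fin (m + 1) → M) (w : Fin (m + 1) → N), typeIn Θ' v = typeIn Θ' w →
      LocalBF L q (pairSet v w)) {v : Fin m → M} {w : Fin m → N}
    (h : typeIn (Θ ∪ Set.range fun S => nearEx (2 ^ q) (typeFormula Θ' S)) v =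
      typeIn (Θ ∪ Set.range fun S => nearEx (2 ^ q) (typeFormula Θ' S)) w) :
    LocalBF L (q + 1) (pairSet v w) := by
  rw [typeIn_eq_typeIn_iff] at h
  refine ⟨hΘ v w (typeIn_eq_typeIn_iff.2 fun θ hθ => h θ (Or.inl hθ)), ?_, ?_⟩ <;>
    rw [fst_image_pairSet, snd_image_pairSet, ← ball_eq_setBall, ← ball_eq_setBall]
  · intro c hc
    obtain ⟨d, hd, hcd⟩ := exists_typeIn_snoc_eq (fun S => (h _ (Or.inr ⟨S, rfl⟩)).1) hc
    exact ⟨d, hd, pairSet_snoc v w c d ▸ hΘ' _ _ hcd⟩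
  · intro d hd
    obtain ⟨c, hc, hdc⟩ := exists_typeIn_snoc_eq (fun S => (h _ (Or.inr ⟨S, rfl⟩)).2) hd
    exact ⟨c, hc, pairSet_snoc v w c d ▸ hΘ' _ _ hdc.symm⟩

variable (L) in
theorem exists_finite_isLocal_typeIn_localBF [L.IsRelational] (q m : ℕ) :
    ∃ (Θ : Set (L.Formula (Fin m))) (r : ℕ), Θ.Finite ∧ (∀ θ ∈ Θ, IsLocal r θ) ∧
      ∀ (M N : Type u) [L.Structure M] [L.Structure N] (v : Fin m → M) (w : Fin m → N),
        typeIn Θ v = typeIn Θ w → LocalBF L q (pairSet v w) := by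
  induction q generalizing m with
  | zero =>
    exact ⟨atomicFormulas L m, 0, (Set.finite_range _).union (Set.finite_range _),
      fun θ => isLocal_of_mem_atomicFormulas,
      fun M N _ _ v w h => isPartialIso_pairSet (typeIn_eq_typeIn_iff.1 h)⟩
  | succ q ih =>
    obtain ⟨Θ, r, hfin, hloc, hΘ⟩ := ih m
    obtain ⟨Θ', r', hfin', hloc', hΘ'⟩ := ih (m + 1)
    have : Finite Θ' := hfin'
    refine ⟨Θ ∪ Set.range fun S => nearEx (2 ^ q) (typeFormula Θ' S), max r (2 ^ q + r'),
      hfin.union (Set.finite_range _), ?_,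
      fun M N _ _ v w => localBF_succ_pairSet (hΘ M N) (hΘ' M N)⟩
    rintro θ (hθ | ⟨S, rfl⟩)
    · exact (hloc θ hθ).mono (le_max_left _ _)
    · exact ((isLocal_typeFormula hloc' S).nearEx _).mono (le_max_right _ _)

end Types

/-! ### Disjoint unions -/

section DisjointUnion

variable {L : FirstOrder.Language.{u, u}} [L.IsRelational] {ι κ : Type}

/-- The disjoint union of a family of structures. A nullary relation holds in it iff it holds in
some member of the family. -/
def disjointUnion (X : ι → Struc L) : Struc L where
  carrier := Σ i, (X i).carrier
  str :=
    { funMap := fun f _ => isEmptyElim f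
      RelMap := fun {n} R t => ∃ (i : ι) (s : Fin n → (X i).carrier),
        (fun j => ⟨i, s j⟩) = t ∧ Structure.RelMap R s }

lemma isGaifmanClosed_preimage_fst (X : ι → Struc L) (J : Set ι) :
    IsGaifmanClosed L (Sigma.fst ⁻¹' J : Set (disjointUnion X).carrier) := by
  rintro a ha b ⟨-, n, R, t, ⟨i, s, rfl, -⟩, ⟨k, rfl⟩, ⟨l, rfl⟩⟩
  exact ha

/-- The embedding of a member of a family into the disjoint union. It reflects nullary relations
only if these agree throughout the family. -/
def inclusion (X : ι → Struc L)
    (hX : ∀ i j, nullaryRels L (X i).carrier = nullaryRels L (X j).carrier) (i : ι) :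
    (X i).carrier ↪[L] (disjointUnion X).carrier where
  toFun x := ⟨i, x⟩
  inj' := sigma_mk_injective (β := fun i => (X i).carrier)
  map_fun' f := isEmptyElim f
  map_rel' {n} R t := by
    refine ⟨?_, fun h => ⟨i, t, rfl, h⟩⟩
    rintro ⟨i', s, hst, hs⟩
    cases n with
    | zero => rwa [relMap_iff_mem_nullaryRels, hX i i', ← relMap_iff_mem_nullaryRels R s]
    | succ n =>
      obtain rfl : i' = i := congrArg Sigma.fst (congrFun hst 0)
      obtain rfl : s = t := funext fun j =>
        sigma_mk_injective (β := fun i => (X i).carrier) (congrFun hst j)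
      exact hs

lemma isGaifmanClosed_range_inclusion (X : ι → Struc L)
    (hX : ∀ i j, nullaryRels L (X i).carrier = nullaryRels L (X j).carrier) (i : ι) :
    IsGaifmanClosed L (Set.range (inclusion X hX i)) := by
  have hrange : Set.range (inclusion X hX i) = Sigma.fst ⁻¹' {i} :=
    Set.range_sigmaMk (α := fun i => (X i).carrier) i
  exact hrange ▸ isGaifmanClosed_preimage_fst X {i}

lemma hasFarCopies_disjointUnion {X : ι → Struc L} {Y : κ → Struc L}
    (hX : ∀ i j, nullaryRels L (X i).carrier = nullaryRels L (X j).carrier)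
    (hY : ∀ i j, nullaryRels L (Y i).carrier = nullaryRels L (Y j).carrier) {K : ℕ}
    (h : ∀ i (x : (X i).carrier), ∃ e : Fin K ↪ κ, ∀ j, ∃ y : (Y (e j)).carrier,
      LocalBF L K {(x, y)}) :
    HasFarCopies L (disjointUnion X).carrier (disjointUnion Y).carrier K := by
  rintro s hs ⟨i, x⟩
  obtain ⟨e, he⟩ := h i x
  obtain ⟨j, hj⟩ : ∃ j, e j ∉ Sigma.fst '' s := by
    by_contra! hall
    refine hs.not_ge ?_
    calc (K : ℕ∞) = ENat.card (Fin K) := by rw [ENat.card_eq_coe_fintype_card, Fintype.card_fin]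
      _ ≤ (Set.range e).encard := e.injective.encard_range
      _ ≤ (Sigma.fst '' s).encard := Set.encard_le_encard (Set.range_subset_iff.2 hall)
      _ ≤ s.encard := Set.encard_image_le _ _
  obtain ⟨y, hxy⟩ := he j
  have hmap := hxy.map (isGaifmanClosed_range_inclusion X hX i)
    (isGaifmanClosed_range_inclusion Y hY (e j))
  rw [Set.image_singleton] at hmap
  exact ⟨inclusion Y hY (e j) y, hmap, fun r hr => hj <|
    (isGaifmanClosed_preimage_fst Y (Sigma.fst '' s)).setBall_subset
      (Set.subset_preimage_image _ _) r hr⟩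

end DisjointUnion

/-! ### Local preorders and disjoint unions -/

section Preservation

variable {L : FirstOrder.Language.{u, u}}

/-- The structure `A` together with `K` copies of `B`. -/
def withCopies (A B : Struc L) (K : ℕ) : Option (Fin K) → Struc L :=
  fun i => i.elim A fun _ => B

lemma nullaryRels_withCopies_eq {A B : Struc L}
    (hAB : nullaryRels L A.carrier = nullaryRels L B.carrier) {K : ℕ} (i j : Option (Fin K)) :
    nullaryRels L (withCopies A B K i).carrier = nullaryRels L (withCopies A B K j).carrier := by
  cases i <;> cases j
  exacts [rfl, hAB, hAB.symm, rfl]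

variable [L.IsRelational]

lemma locLEE_of_isEmpty {M N : Type u} [L.Structure M] [L.Structure N] [IsEmpty M] (r q : ℕ∞)
    {k : ℕ} [NeZero k] : LocLEE L r q k M N :=
  fun _ _ _ _ _ _ _ ⟨a, _⟩ => isEmptyElim (a 0)

lemma locLEE_refl (M : Type u) [L.Structure M] (r q : ℕ∞) (k : ℕ) : LocLEE L r q k M M :=
  fun _ _ _ _ _ _ _ => id

lemma IsGaifmanClosed.realize_comp_iff {M N : Type u} [L.Structure M] [L.Structure N]
    {f : M ↪[L] N} (hf : IsGaifmanClosed L (Set.range f)) {r m : ℕ} {τ : L.Formula (Fin m)}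
    (hτ : IsLocal r τ) (a : Fin m → M) : τ.Realize (f ∘ a) ↔ τ.Realize a :=
  hτ.realize_comp_iff f a
    (ball_eq_setBall (L := L) (f ∘ a) r ▸ hf.setBall_subset (Set.range_comp_subset_range a f) r)

lemma locLEE_of_isGaifmanClosed_range {M N : Type u} [L.Structure M] [L.Structure N]
    {f : M ↪[L] N} (hf : IsGaifmanClosed L (Set.range f)) (r q : ℕ∞) (k : ℕ) :
    LocLEE L r q k M N :=
  fun _ _ _ _ _ hτ _ ⟨a, ha⟩ => ⟨f ∘ a, (hf.realize_comp_iff hτ a).2 ha⟩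

-- A single element lies in one member of the family; the entries of a longer tuple need not.
lemma disjointUnion_locLEE_one {ι : Type} {X : ι → Struc L}
    (hX : ∀ i j, nullaryRels L (X i).carrier = nullaryRels L (X j).carrier) {N : Type u}
    [L.Structure N] {r q : ℕ∞} (h : ∀ i, LocLEE L r q 1 (X i).carrier N) :
    LocLEE L r q 1 (disjointUnion X).carrier N := by
  rintro r' q' hr hq τ hτ hτq ⟨a, ha⟩
  obtain ⟨⟨i, x⟩, rfl⟩ : ∃ z, a = fun _ => z :=
    ⟨a 0, funext fun j => congrArg a (Subsingleton.elim j 0)⟩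
  have hx : τ.Realize fun _ => x :=
    ((isGaifmanClosed_range_inclusion X hX i).realize_comp_iff hτ fun _ => x).1 ha
  exact h i r' q' hr hq τ hτ hτq ⟨_, hx⟩

/-- The sentence `φ` is preserved under `≼_{r,q,k}` over the class `C`. -/
def PreservedUnderLocLEE (C : Set (Struc L)) (r q : ℕ∞) (k : ℕ) (φ : L.Sentence) : Prop :=
  ∀ A ∈ C, ∀ B ∈ C, A.carrier ⊨ φ → LocLEE L r q k A.carrier B.carrier → B.carrier ⊨ φ

/-- A class closed under disjoint unions of nonempty finite families of its members. -/
def ClosedUnderFiniteDisjointUnions (C : Set (Struc L)) : Prop :=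
  ∀ (ι : Type) [Finite ι] [Nonempty ι] (X : ι → Struc L), (∀ i, X i ∈ C) → disjointUnion X ∈ C

-- The two sides differ by `A` only, each of whose elements is locally equivalent to one of `B`,
-- and `B` is repeated often enough to provide a fresh copy in every round of the game.
lemma realize_disjointUnion_withCopies_iff {A B : Struc L} [Nonempty A.carrier] {K : ℕ}
    {φ : L.Sentence} (hφ : qr φ < K)
    (h : ∀ x : A.carrier, ∃ y : B.carrier, LocalBF L K {(x, y)}) :
    (disjointUnion (withCopies A B K)).carrier ⊨ φ ↔
      (disjointUnion fun _ : Fin K => B).carrier ⊨ φ := by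
  obtain ⟨x⟩ := ‹Nonempty A.carrier›
  obtain ⟨y, hxy⟩ := h x
  have hAB : nullaryRels L A.carrier = nullaryRels L B.carrier := hxy.nullaryRels_eq
  have hX := nullaryRels_withCopies_eq (K := K) hAB
  have hB : ∀ b : B.carrier, LocalBF L K {(b, b)} := fun b =>
    localBF_of_diagonal fun p hp => by rw [Set.mem_singleton_iff.1 hp]
  have hnull : nullaryRels L (disjointUnion (withCopies A B K)).carrier =
      nullaryRels L (disjointUnion fun _ : Fin K => B).carrier :=
    ((nullaryRels_eq_of_embedding (inclusion _ hX none)).symm.trans hAB).trans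
      (nullaryRels_eq_of_embedding (inclusion (fun _ => B) (fun _ _ => rfl) ⟨0, by lia⟩))
  refine realize_sentence_iff_of_hasFarCopies hφ.le hnull
    (hasFarCopies_disjointUnion hX (fun _ _ => rfl) ?_)
    (hasFarCopies_disjointUnion (fun _ _ => rfl) hX ?_)
  · rintro (_ | i) b
    exacts [⟨.refl _, fun _ => h b⟩, ⟨.refl _, fun _ => ⟨b, hB b⟩⟩]
  · exact fun _ b => ⟨.some, fun _ => ⟨b, hB b⟩⟩

theorem PreservedUnderLocLEE.realize_of_localBF {C : Set (Struc L)}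
    (hC : ClosedUnderFiniteDisjointUnions C) {r q : ℕ∞} {φ : L.Sentence}
    (hφ : PreservedUnderLocLEE C r q 1 φ) {A B : Struc L} (hA : A ∈ C) (hB : B ∈ C)
    (hAφ : A.carrier ⊨ φ)
    (h : ∀ x : A.carrier, ∃ y : B.carrier, LocalBF L (qr φ + 1) {(x, y)}) : B.carrier ⊨ φ := by
  cases isEmpty_or_nonempty A.carrier with
  | inl _ => exact hφ A hA B hB hAφ (locLEE_of_isEmpty r q)
  | inr hne =>
    obtain ⟨y, hxy⟩ := h hne.some
    have hX := nullaryRels_withCopies_eq (K := qr φ + 1) hxy.nullaryRels_eq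
    have hXC : disjointUnion (withCopies A B (qr φ + 1)) ∈ C :=
      hC _ _ (Option.forall.2 ⟨hA, fun _ => hB⟩)
    have hYC : (disjointUnion fun _ : Fin (qr φ + 1) => B) ∈ C := hC _ _ fun _ => hB
    have hXφ := hφ A hA _ hXC hAφ
      (locLEE_of_isGaifmanClosed_range (isGaifmanClosed_range_inclusion _ hX none) r q 1)
    have hYφ := (realize_disjointUnion_withCopies_iff (Nat.lt_succ_self _) h).1 hXφ
    exact hφ _ hYC B hB hYφ
      (disjointUnion_locLEE_one (fun _ _ => rfl) fun _ => locLEE_refl B.carrier r q 1)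

lemma closedUnderFiniteDisjointUnions_finite :
    ClosedUnderFiniteDisjointUnions {S : Struc L | Finite S.carrier} := by
  intro ι _ _ X hX
  have : ∀ i, Finite (X i).carrier := hX
  exact inferInstanceAs (Finite (Σ i, (X i).carrier))

end Preservation

/-! ### Existential local sentences -/

section ExistentialLocal

variable {L : FirstOrder.Language.{u, u}}

/-- The types over `Θ` realised by the elements of a structure. -/
def realizedTypes (Θ : Set (L.Formula (Fin 1))) (M : Type u) [L.Structure M] : Set (Set Θ) :=
  Set.range fun x : M => typeIn Θ fun _ => x

/-- The formula stating that for some `T ∈ 𝒯`, the variables indexed by the members of `T`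
realise these types. -/
noncomputable def realizesAllFormula {Θ : Set (L.Formula (Fin 1))} [Finite Θ] {k : ℕ}
    (e : Set Θ ≃ Fin k) (𝒯 : Set (Set (Set Θ))) : L.Formula (Fin k) :=
  Formula.iSup fun T : 𝒯 => Formula.iInf fun S : T.1 => (typeFormula Θ S.1).relabel fun _ => e S

lemma realize_realizesAllFormula {Θ : Set (L.Formula (Fin 1))} [Finite Θ] {k : ℕ}
    {e : Set Θ ≃ Fin k} {𝒯 : Set (Set (Set Θ))} {M : Type u} [L.Structure M] {v : Fin k → M} :
    (realizesAllFormula e 𝒯).Realize v ↔ ∃ T ∈ 𝒯, ∀ S ∈ T, typeIn Θ (fun _ => v (e S)) = S := by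
  simp only [realizesAllFormula, Formula.realize_iSup, Formula.realize_iInf,
    Formula.realize_relabel, realize_typeFormula, Subtype.exists, Subtype.forall, exists_prop,
    Function.comp_def]

lemma exists_realize_realizesAllFormula {Θ : Set (L.Formula (Fin 1))} [Finite Θ] {k : ℕ}
    (e : Set Θ ≃ Fin k) {𝒯 : Set (Set (Set Θ))} {M : Type u} [L.Structure M] [Nonempty M]
    (hM : realizedTypes Θ M ∈ 𝒯) : ∃ v : Fin k → M, (realizesAllFormula e 𝒯).Realize v := by
  have hwitness : ∀ S : Set Θ, ∃ x : M, S ∈ realizedTypes Θ M → typeIn Θ (fun _ => x) = S := by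
    intro S
    by_cases hS : S ∈ realizedTypes Θ M
    · exact hS.imp fun x hx _ => hx
    · exact ⟨Classical.arbitrary M, fun h => absurd h hS⟩
  choose x hx using hwitness
  refine ⟨x ∘ e.symm, realize_realizesAllFormula.2 ⟨_, hM, fun S hS => ?_⟩⟩
  simpa only [Function.comp_apply, e.symm_apply_apply] using hx S hS

variable [L.IsRelational]

lemma isLocal_realizesAllFormula {Θ : Set (L.Formula (Fin 1))} [Finite Θ] {k r : ℕ}
    (hΘ : ∀ θ ∈ Θ, IsLocal r θ) (e : Set Θ ≃ Fin k) (𝒯 : Set (Set (Set Θ))) :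
    IsLocal r (realizesAllFormula e 𝒯) :=
  isLocal_iSup fun _ => isLocal_iInf fun S => (isLocal_typeFormula hΘ S.1).relabel _

lemma equivToExistLocal_of_forall_realize {C : Set (Struc L)} {φ : L.Sentence}
    (h : ∀ S ∈ C, S.carrier ⊨ φ) : EquivToExistLocal C φ :=
  ⟨0, 0, ⊤, fun _ _ _ => Iff.rfl,
    fun S hS => iff_of_true (h S hS) ⟨default, Formula.realize_top.2 trivial⟩⟩

theorem equivToExistLocal_of_realizedTypes_mono {C : Set (Struc L)} {φ : L.Sentence}
    {Θ : Set (L.Formula (Fin 1))} [Finite Θ] {r : ℕ} (hΘ : ∀ θ ∈ Θ, IsLocal r θ)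
    (hφ : ∀ A ∈ C, ∀ B ∈ C, A.carrier ⊨ φ →
      realizedTypes Θ A.carrier ⊆ realizedTypes Θ B.carrier → B.carrier ⊨ φ) :
    EquivToExistLocal C φ := by
  by_cases hempty : ∃ E ∈ C, IsEmpty E.carrier ∧ E.carrier ⊨ φ
  · obtain ⟨E, hE, hEempty, hEφ⟩ := hempty
    exact equivToExistLocal_of_forall_realize fun S hS =>
      hφ E hE S hS hEφ (Set.range_subset_iff.2 hEempty.elim)
  obtain ⟨k, ⟨e⟩⟩ := Finite.exists_equiv_fin (Set Θ)
  let 𝒯 := {T | ∃ A ∈ C, A.carrier ⊨ φ ∧ realizedTypes Θ A.carrier = T}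
  refine ⟨k, r, realizesAllFormula e 𝒯, isLocal_realizesAllFormula hΘ e 𝒯,
    fun S hS => ⟨fun hSφ => ?_, ?_⟩⟩
  · have : Nonempty S.carrier := not_isEmpty_iff.1 fun hSempty => hempty ⟨S, hS, hSempty, hSφ⟩
    exact exists_realize_realizesAllFormula e ⟨S, hS, hSφ, rfl⟩
  · rintro ⟨v, hv⟩
    obtain ⟨_, ⟨A, hA, hAφ, rfl⟩, hv⟩ := realize_realizesAllFormula.1 hv
    exact hφ A hA S hS hAφ fun T hT => ⟨v (e T), hv T hT⟩

end ExistentialLocal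

end Gaifman

theorem success_at_k_eq_one_general {L : FirstOrder.Language.{u, u}} [L.IsRelational]
    [Finite (Σ n, L.Relations n)] {C : Set (Struc L)} (hC : ClosedUnderFiniteDisjointUnions C)
    (r q : ℕ∞) (φ : L.Sentence) (hφ : PreservedUnderLocLEE C r q 1 φ) :
    EquivToExistLocal C φ := by
  obtain ⟨Θ, s, hfin, hloc, hΘ⟩ := exists_finite_isLocal_typeIn_localBF L (qr φ + 1) 1
  have : Finite Θ := hfin
  refine equivToExistLocal_of_realizedTypes_mono hloc fun A hA B hB hAφ hAB =>
    hφ.realize_of_localBF hC hA hB hAφ fun x => ?_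
  obtain ⟨y, hxy⟩ := hAB ⟨x, rfl⟩
  refine ⟨y, ?_⟩
  simpa only [pairSet, Set.range_const] using
    hΘ A.carrier B.carrier (fun _ => x) (fun _ => y) hxy.symm

/-- **Success at `k = 1`.** For all `r, q ∈ ℕ ∪ {∞}`, every sentence preserved under
`≼_{r,q,1}` over the class of all finite structures is equivalent over that class to an
existential local sentence. -/
theorem success_at_k_eq_one (L : FirstOrder.Language.{u, u}) [L.IsRelational]
    [Finite (Σ n, L.Relations n)] (r q : ℕ∞) (φ : L.Sentence)
    (hpres : ∀ (A B : Type u) [L.Structure A] [L.Structure B], Finite A → Finite B →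
      A ⊨ φ → LocLEE L r q 1 A B → B ⊨ φ) :
    ∃ (k r' : ℕ) (τ : L.Formula (Fin k)), IsLocal r' τ ∧
      ∀ (M : Type u) [L.Structure M], Finite M →
        (M ⊨ φ ↔ ∃ a : Fin k → M, τ.Realize a) := by
  obtain ⟨k, r', τ, hτ, h⟩ := success_at_k_eq_one_general closedUnderFiniteDisjointUnions_finite
    r q φ fun A hA B hB => hpres A.carrier B.carrier hA hB
  exact ⟨k, r', τ, hτ, fun M str hM => h ⟨M, str⟩ hM⟩
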